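/- Every 2-connected graph on n vertices with δ ≥ α and δ ≥ (n+2)/3 is hamiltonian, where δ is the minimum degree and α the independence number. -/

import Mathlib

open SimpleGraph

variable {V : Type*}

/-- `G` is `k`-connected: more than `k` vertices and removing fewer than `k`
vertices leaves a connected graph. -/
def KConnected (G : SimpleGraph V) [Fintype V] [DecidableEq V] (k : ℕ) : Prop :=
  k < Fintype.card V ∧
    ∀ S : Finset V, S.card < k → (G.induce ((↑S : Set V)ᶜ)).Connected

/-- vertex connectivity `κ`. -/
noncomputable def connectivity (G : SimpleGraph V) [Fintype V] [DecidableEq V] : ℕ :=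
  sSup {k | KConnected G k}

/-- independence number `α`. -/
noncomputable def indepNumber (G : SimpleGraph V) [Fintype V] [DecidableEq V] : ℕ :=
  sSup {k | ∃ s : Finset V, (∀ u ∈ s, ∀ v ∈ s, ¬ G.Adj u v) ∧ s.card = k}

/-- circumference `c`: length of a longest cycle. -/
noncomputable def circumference (G : SimpleGraph V) [Fintype V] [DecidableEq V] : ℕ :=
  sSup {n | ∃ (v : V) (w : G.Walk v v), w.IsCycle ∧ w.length = n}

/-- `w` is a longest cycle of `G`. -/
def IsLongestCycle {G : SimpleGraph V} {v : V} (w : G.Walk v v) : Prop :=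
  w.IsCycle ∧ ∀ (u : V) (w' : G.Walk u u), w'.IsCycle → w'.length ≤ w.length

/-- dominating cycle: every edge has an endpoint on the cycle. -/
def IsDominatingCycle {G : SimpleGraph V} {v : V} (w : G.Walk v v) : Prop :=
  w.IsCycle ∧ ∀ x y, G.Adj x y → x ∈ w.support ∨ y ∈ w.support

/-- generalized cycle of length `n` with vertex set `W`: single vertices are
cycles of length 1, edges are cycles of length 2. -/
def ExtCycle (G : SimpleGraph V) (W : Set V) (n : ℕ) : Prop :=
  (n = 1 ∧ ∃ v : V, W = {v}) ∨
  (n = 2 ∧ ∃ u v : V, G.Adj u v ∧ W = {u, v}) ∨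
  (3 ≤ n ∧ ∃ (v : V) (w : G.Walk v v), w.IsCycle ∧ w.length = n ∧
      W = {x | x ∈ w.support})

/-- `p̄`: the length of a longest path in `G \ C`. -/
noncomputable def pathBar (G : SimpleGraph V) [Fintype V] [DecidableEq V] {v : V} (w : G.Walk v v) : ℕ :=
  sSup {n | ∃ (a b : {x : V | x ∉ w.support})
      (p : (G.induce {x : V | x ∉ w.support}).Walk a b), p.IsPath ∧ p.length = n}

/-- `c̄`: the length of a longest (generalized) cycle in `G \ C`. -/
noncomputable def cycBar (G : SimpleGraph V) [Fintype V] [DecidableEq V] {v : V} (w : G.Walk v v) : ℕ :=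
  sSup {n | ∃ W, ExtCycle (G.induce {x : V | x ∉ w.support}) W n}

/-- `CD_m`-cycle: every (generalized) cycle of length at least `m` meets `w`. -/
def IsCDCycle (G : SimpleGraph V) {v : V} (w : G.Walk v v) (m : ℕ) : Prop :=
  w.IsCycle ∧ ∀ (W : Set V) (n : ℕ), ExtCycle G W n → m ≤ n → ∃ x ∈ W, x ∈ w.support

/-!
Suppose the graph is not Hamiltonian, and add edges until it is edge-maximal with this property;
this preserves all hypotheses. Let `δ` be the minimum degree. Any two nonadjacent vertices `u`, `v`
are now the ends of a Hamilton path.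

*There is a cycle of length at least `2 δ`.* Suppose first that along such a path some neighbour of
`v` comes before some neighbour of `u`. Choosing these as close together as possible and skipping
what lies between them gives a cycle which has room for the neighbours of `u` and the shifted
neighbours of `v`. If this happens for no pair, then nonadjacent vertices have at most one common
neighbour, so by `3 δ > n` there are no three independent vertices. Hence, if `u` and `v` have the
common neighbour `w`, the path consists of `u`, neighbours of `u` up to `w`, neighbours of `v` from
`w` on, and `v`. As `w` is not a cut vertex, some edge jumps over it, and this edge closes the path
up to a Hamilton cycle.

*A longest cycle `C` of length at least `2 δ` is Hamiltonian.* Otherwise let `Q` be a longest path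
outside `C`, of length `l`. Its ends `x` and `y` have all their neighbours on `C` or on `Q`. If
`l = 0`, then `x` and the successors on `C` of its at least `δ` neighbours form an independent set
of more than `α` vertices. If `l > 0`, then each end has at least `δ - l` neighbours on `C`, and the
maximality of `C` leaves more than `l` vertices free of neighbours of `y` after each neighbour of
`x`, and vice versa. Two of these gaps are free of neighbours of both ends, so `C` has at least
`3 (δ - l) + 2 (l - 1)` vertices, which together with the `l + 1` vertices of `Q` is more than `n`.
-/

section Walks

variable {G : SimpleGraph V} {u v w x : V}

lemma isPath_append_cons {p : G.Walk u v} {q : G.Walk w x} (hp : p.IsPath) (hq : q.IsPath)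
    (h : G.Adj v w) (hpq : p.support.Disjoint q.support) :
    (p.append (q.cons h)).IsPath := by
  rw [Walk.isPath_def, Walk.support_append, Walk.support_cons, List.tail_cons]
  exact hp.support_nodup.append hq.support_nodup hpq

lemma isCycle_cons {p : G.Walk u v} (hp : p.IsPath) (h : G.Adj v u) (hlen : 2 ≤ p.length) :
    (p.cons h).IsCycle := by
  rw [Walk.isCycle_iff_isPath_tail_and_le_length]
  exact ⟨by simpa using hp, by simpa using hlen⟩

lemma exists_isPath_of_injOn {g : ℕ → V} {i j : ℕ} (hij : i ≤ j)
    (hg : Set.InjOn g (Set.Icc i j)) (hadj : ∀ m, i ≤ m → m < j → G.Adj (g m) (g (m + 1))) :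
    ∃ q : G.Walk (g i) (g j), q.IsPath ∧ q.length = j - i ∧
      ∀ x, x ∈ q.support ↔ x ∈ g '' Set.Icc i j := by
  induction j, hij using Nat.le_induction with
  | base => exact ⟨.nil, by simp, by simp, by simp⟩
  | succ j hij ih =>
    obtain ⟨q, hq, hlen, hsupp⟩ := ih (hg.mono <| Set.Icc_subset_Icc_right j.le_succ)
      fun m him hmj ↦ hadj m him (by lia)
    have hIcc : Set.Icc i (j + 1) = insert (j + 1) (Set.Icc i j) := by
      ext m; simp only [Set.mem_Icc, Set.mem_insert_iff]; lia
    have hnew : g (j + 1) ∉ q.support := by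
      rw [hsupp]
      rintro ⟨m, ⟨him, hmj⟩, hgm⟩
      have := hg ⟨him, by lia⟩ ⟨by lia, le_rfl⟩ hgm
      lia
    refine ⟨q.concat (hadj j hij (by lia)), hq.concat hnew _, ?_, fun x ↦ ?_⟩
    · rw [Walk.length_concat, hlen]
      lia
    · rw [Walk.support_concat, hIcc, Set.image_insert_eq, Set.mem_insert_iff,
        List.mem_append, hsupp, List.mem_singleton, or_comm]

lemma exists_isPath_getVert {p : G.Walk u v} (hp : p.IsPath) {i j : ℕ} (hij : i ≤ j)
    (hj : j ≤ p.length) :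
    ∃ q : G.Walk (p.getVert i) (p.getVert j), q.IsPath ∧ q.length = j - i ∧
      ∀ x, x ∈ q.support ↔ x ∈ p.getVert '' Set.Icc i j :=
  exists_isPath_of_injOn hij (hp.getVert_injOn.mono fun _ hm ↦ hm.2.trans hj)
    fun _ _ hm ↦ p.adj_getVert_succ (hm.trans_le hj)

end Walks

section Circumference

variable {G : SimpleGraph V} {u v : V}

lemma isCycle_length_le_card [Fintype V] {p : G.Walk u u} (hp : p.IsCycle) :
    p.length ≤ Fintype.card V := by
  simpa using hp.support_nodup.length_le_card

lemma bddAbove_isCycle_length [Finite V] (G : SimpleGraph V) :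
    BddAbove {n | ∃ (v : V) (w : G.Walk v v), w.IsCycle ∧ w.length = n} := by
  have := Fintype.ofFinite V
  refine ⟨Fintype.card V, ?_⟩
  rintro n ⟨v, w, hw, rfl⟩
  exact isCycle_length_le_card hw

variable [Fintype V] [DecidableEq V]

lemma length_le_circumference {p : G.Walk u u} (hp : p.IsCycle) :
    p.length ≤ circumference G :=
  le_csSup (bddAbove_isCycle_length G) ⟨u, p, hp, rfl⟩

lemma length_lt_circumference {p : G.Walk u v} (hp : p.IsPath) (h : G.Adj v u)
    (hlen : 2 ≤ p.length) : p.length < circumference G := by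
  simpa using length_le_circumference (isCycle_cons hp h hlen)

lemma exists_isCycle_length_eq_circumference (h : 0 < circumference G) :
    ∃ (v : V) (w : G.Walk v v), w.IsCycle ∧ w.length = circumference G :=
  Nat.sSup_mem (Set.nonempty_iff_ne_empty.2 fun he ↦ by simp [circumference, he] at h)
    (bddAbove_isCycle_length G)

lemma isHamiltonian_of_card_le_circumference [Nonempty V]
    (h : Fintype.card V ≤ circumference G) : G.IsHamiltonian := by
  obtain ⟨v, w, hw, hlen⟩ :=
    exists_isCycle_length_eq_circumference (Fintype.card_pos.trans_le h)
  refine fun _ ↦ ⟨v, w, Walk.isHamiltonianCycle_iff_isCycle_and_length_eq.2 ⟨hw, ?_⟩⟩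
  exact (isCycle_length_le_card hw).antisymm (hlen ▸ h)

end Circumference

section CycleEnum

/-- An enumeration of the vertices of a cycle of length `c` in cyclic order. Indexing by `ZMod c`
makes the successor of `f i` on the cycle `f (i + 1)` without a case distinction. -/
structure IsCycleEnum (G : SimpleGraph V) {c : ℕ} (f : ZMod c → V) : Prop where
  three_le : 3 ≤ c
  injective : Function.Injective f
  adj : ∀ i, G.Adj (f i) (f (i + 1))

variable {G : SimpleGraph V} {c : ℕ}

lemma natCast_injOn_Icc {a b : ℕ} (hb : b < a + c) :
    Set.InjOn (Nat.cast : ℕ → ZMod c) (Set.Icc a b) := by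
  rintro m ⟨ham, hmb⟩ n ⟨han, hnb⟩ hmn
  rw [ZMod.natCast_eq_natCast_iff] at hmn
  wlog hle : m ≤ n generalizing m n
  · exact (this han hnb ham hmb hmn.symm (by lia)).symm
  have := Nat.eq_zero_of_dvd_of_lt ((Nat.modEq_iff_dvd' hle).1 hmn) (by lia)
  lia

lemma exists_natCast_add_eq [NeZero c] {i j : ZMod c} (hij : i ≠ j) :
    ∃ d : ℕ, 0 < d ∧ d < c ∧ i + d = j :=
  ⟨(j - i).val, ZMod.val_pos.2 (sub_ne_zero.2 hij.symm), ZMod.val_lt _, by simp⟩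

lemma exists_isCycleEnum {u : V} {p : G.Walk u u} (hp : p.IsCycle) (hlen : p.length = c) :
    ∃ f : ZMod c → V, IsCycleEnum G f := by
  have hc := hlen ▸ hp.three_le_length
  have : NeZero c := ⟨by lia⟩
  have : Fact (1 < c) := ⟨by lia⟩
  have hval (i : ZMod c) : i.val ≤ p.length - 1 := by have := i.val_lt; lia
  refine ⟨fun i ↦ p.getVert i.val, hc, fun i j hij ↦ ?_, fun i ↦ ?_⟩
  · exact ZMod.val_injective c (hp.getVert_injOn' (hval i) (hval j) hij)
  · have hadj := p.adj_getVert_succ (i.val_lt.trans_eq hlen.symm)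
    rcases (show i.val + 1 ≤ c from i.val_lt).lt_or_eq with hlt | heq
    · rwa [ZMod.val_add_of_lt (by rwa [ZMod.val_one]), ZMod.val_one]
    · have hi : i + 1 = 0 := by
        rw [← ZMod.natCast_rightInverse i, ← Nat.cast_succ, Nat.succ_eq_add_one, heq,
          ZMod.natCast_self]
      have hu : p.getVert (i.val + 1) = u := by rw [heq, ← hlen, p.getVert_length]
      simpa [hi, hu] using hadj

namespace IsCycleEnum

variable {f : ZMod c → V}

lemma exists_isPath (hf : IsCycleEnum G f) (i : ZMod c) {a b : ℕ} (hab : a ≤ b)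
    (hb : b < a + c) :
    ∃ q : G.Walk (f (i + a)) (f (i + b)), q.IsPath ∧ q.length = b - a ∧
      ∀ x, x ∈ q.support ↔ x ∈ (fun m : ℕ ↦ f (i + m)) '' Set.Icc a b :=
  exists_isPath_of_injOn (g := fun m : ℕ ↦ f (i + m)) hab
    ((hf.injective.comp (add_right_injective i)).comp_injOn (natCast_injOn_Icc hb))
    fun m _ _ ↦ by simpa [add_assoc] using hf.adj (i + m)

lemma length_le_circumference [Fintype V] [DecidableEq V] (hf : IsCycleEnum G f) :
    c ≤ circumference G := by
  have hc := hf.three_le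
  obtain ⟨q, hq, hlen, -⟩ := hf.exists_isPath 0 (Nat.zero_le (c - 1)) (by lia)
  have hadj : G.Adj (f (0 + (c - 1 : ℕ))) (f (0 + (0 : ℕ))) := by
    simpa [Nat.cast_sub (show 1 ≤ c by lia)] using hf.adj (-1)
  have := length_lt_circumference hq hadj (by lia)
  lia

end IsCycleEnum

end CycleEnum

section HamiltonPath

variable [DecidableEq V] {G : SimpleGraph V} {u v : V}

lemma exists_isHamiltonian_of_mem_edges {C : G.Walk u u} (hC : C.IsHamiltonianCycle)
    (h : s(u, v) ∈ C.edges) : ∃ p : G.Walk u v, p.IsHamiltonian ∧ s(u, v) ∉ p.edges := by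
  wlog hsnd : v = C.snd generalizing C
  · have hv : v ∈ C.toSubgraph.neighborSet u := C.adj_toSubgraph_iff_mem_edges.2 h
    rw [hC.isCycle.neighborSet_toSubgraph_endpoint] at hv
    refine this (C := C.reverse) ?_ (by simpa using h) ?_
    · have := hC.finite
      have := Fintype.ofFinite V
      rw [Walk.isHamiltonianCycle_iff_isCycle_and_length_eq] at hC ⊢
      exact ⟨hC.1.reverse, by rw [Walk.length_reverse, hC.2]⟩
    · rw [hv.resolve_left hsnd, Walk.snd_reverse]
  subst hsnd
  have hnot : s(u, C.snd) ∉ C.tail.edges := by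
    have := hC.isCycle.isTrail
    rw [← C.cons_tail_eq hC.isCycle.not_nil, Walk.isTrail_cons] at this
    exact this.2
  exact ⟨C.tail.reverse, hC.isCycle.isPath_tail.reverse.isHamiltonian_of_mem
    fun w ↦ by simpa only [Walk.support_reverse, List.mem_reverse]
      using hC.isHamiltonian_tail.mem_support w,
    by rwa [Walk.edges_reverse, List.mem_reverse]⟩

lemma exists_isHamiltonian_of_sup_edge [Fintype V] (hG : ¬ G.IsHamiltonian)
    (huv : (G ⊔ edge u v).IsHamiltonian) : ∃ p : G.Walk u v, p.IsHamiltonian := by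
  have mem_edgeSet {e : Sym2 V} (he : e ∈ (G ⊔ edge u v).edgeSet) (hne : e ≠ s(u, v)) :
      e ∈ G.edgeSet := by
    rw [edgeSet_sup] at he
    exact he.resolve_right fun he ↦ hne (by simp_all [edgeSet_edge])
  obtain ⟨w, C', hC'⟩ := huv fun h ↦ hG (.of_card_eq_one h)
  obtain ⟨C, hC⟩ : ∃ C : (G ⊔ edge u v).Walk u u, C.IsHamiltonianCycle :=
    ⟨_, hC'.rotate (hC'.mem_support u)⟩
  have hmem : s(u, v) ∈ C.edges := by
    by_contra hmem
    have hedges : ∀ e ∈ C.edges, e ∈ G.edgeSet :=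
      fun e he ↦ mem_edgeSet (C.edges_subset_edgeSet he) (ne_of_mem_of_not_mem he hmem)
    exact hG fun _ ↦ ⟨u, C.transfer G hedges,
      Walk.isHamiltonianCycle_iff_isCycle_and_length_eq.2
        ⟨hC.isCycle.transfer hedges, by rw [Walk.length_transfer, hC.length_eq]⟩⟩
  obtain ⟨p, hp, hnot⟩ := exists_isHamiltonian_of_mem_edges hC hmem
  have hedges : ∀ e ∈ p.edges, e ∈ G.edgeSet :=
    fun e he ↦ mem_edgeSet (p.edges_subset_edgeSet he) (ne_of_mem_of_not_mem he hnot)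
  exact ⟨p.transfer G hedges, (hp.isPath.transfer hedges).isHamiltonian_of_mem
    fun w ↦ by simpa using hp.mem_support w⟩

end HamiltonPath

section Crossing

open Finset

variable {G : SimpleGraph V} {u v w : V}

/-- A walk from `u` to `v` crosses if it meets a neighbour of `v` strictly before a neighbour
of `u`. Reversing the part of the walk between the first of these and `v` then yields a cycle. -/
def Crosses (p : G.Walk u v) : Prop :=
  ∃ i j, i < j ∧ j ≤ p.length ∧ G.Adj v (p.getVert i) ∧ G.Adj u (p.getVert j)

lemma Crosses.exists_closest {p : G.Walk u v} (hp : Crosses p) :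
    ∃ i d, 0 < d ∧ i + d ≤ p.length ∧ G.Adj v (p.getVert i) ∧ G.Adj u (p.getVert (i + d)) ∧
      ∀ a b, a < b → b ≤ p.length → G.Adj v (p.getVert a) → G.Adj u (p.getVert b) →
        d ≤ b - a := by
  classical
  have hex : ∃ d, 0 < d ∧ ∃ i, i + d ≤ p.length ∧ G.Adj v (p.getVert i) ∧
      G.Adj u (p.getVert (i + d)) := by
    obtain ⟨i, j, hij, hj, hvi, huj⟩ := hp
    obtain ⟨d, rfl⟩ := Nat.exists_eq_add_of_lt hij
    exact ⟨d + 1, d.succ_pos, i, hj, hvi, huj⟩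
  obtain ⟨hd, i, hid, hvi, hui⟩ := Nat.find_spec hex
  refine ⟨i, Nat.find hex, hd, hid, hvi, hui, fun a b hab hb hva hub ↦ Nat.find_min' hex ?_⟩
  exact ⟨by lia, a, by lia, hva, by rwa [Nat.add_sub_cancel' hab.le]⟩

lemma lt_circumference_of_adj_getVert [Fintype V] [DecidableEq V] {p : G.Walk u v} (hp : p.IsPath)
    (huv : ¬ G.Adj u v) {i d : ℕ} (hd : 0 < d) (hid : i + d ≤ p.length)
    (hv : G.Adj v (p.getVert i)) (hu : G.Adj u (p.getVert (i + d))) :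
    p.length + 1 - d < circumference G := by
  have hi : i ≠ 0 := by
    rintro rfl
    exact huv (by simpa using hv.symm)
  obtain ⟨q, hq, hqlen, hqsupp⟩ := exists_isPath_getVert hp (Nat.zero_le i) (by lia)
  obtain ⟨r, hr, hrlen, hrsupp⟩ := exists_isPath_getVert hp hid le_rfl
  have hdisj : q.support.Disjoint r.reverse.support := by
    intro x hxq hxr
    rw [Walk.support_reverse, List.mem_reverse] at hxr
    obtain ⟨a, ha, rfl⟩ := (hqsupp _).1 hxq
    obtain ⟨b, hb, hab⟩ := (hrsupp _).1 hxr
    have := hp.getVert_injOn hb.2 (ha.2.trans (by lia)) hab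
    have := ha.2
    have := hb.1
    lia
  have := length_lt_circumference
    (isPath_append_cons hq hr.reverse (by simpa using hv.symm) hdisj) (by simpa using hu.symm)
    (by simp only [Walk.length_append, Walk.length_cons, Walk.length_reverse]; lia)
  simp only [Walk.length_append, Walk.length_cons, Walk.length_reverse, hqlen, hrlen] at this
  lia

variable [Fintype V] [DecidableRel G.Adj]

lemma degree_le_card_filter_getVert (p : G.Walk u v) (hw : ∀ x, G.Adj w x → x ∈ p.support) :
    G.degree w ≤ #{i ∈ range (p.length + 1) | G.Adj w (p.getVert i)} := by
  classical
  rw [← card_neighborFinset_eq_degree]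
  refine (card_le_card fun x hx ↦ ?_).trans (card_image_le (f := p.getVert))
  rw [mem_neighborFinset] at hx
  obtain ⟨i, rfl, hi⟩ := Walk.mem_support_iff_exists_getVert.1 (hw x hx)
  exact mem_image_of_mem _ (by simpa [Nat.lt_succ_iff, hi] using hx)

lemma degree_add_degree_le_circumference [DecidableEq V] {p : G.Walk u v} (hp : p.IsPath)
    (hcross : Crosses p) (huv : ¬ G.Adj u v) (hu : ∀ x, G.Adj u x → x ∈ p.support)
    (hv : ∀ x, G.Adj v x → x ∈ p.support) (hlen : circumference G ≤ p.length) :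
    G.degree u + G.degree v ≤ circumference G := by
  obtain ⟨i, d, hd, hid, hvi, hui, hmin⟩ := hcross.exists_closest
  have hcirc := lt_circumference_of_adj_getVert hp huv hd hid hvi hui
  set X := {a ∈ range (p.length + 1) | G.Adj u (p.getVert a)} with hX
  set Y := {a ∈ range (p.length + 1) | G.Adj v (p.getVert a)} with hY
  have mem_X (a : ℕ) : a ∈ X ↔ a < p.length + 1 ∧ G.Adj u (p.getVert a) := by simp [hX]
  have mem_Y (a : ℕ) : a ∈ Y ↔ a < p.length + 1 ∧ G.Adj v (p.getVert a) := by simp [hY]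
  have hdisj : Disjoint X (Y.map (addRightEmbedding 1)) := by
    refine Finset.disjoint_right.2 (Finset.forall_mem_map.2 fun a ha hb ↦ ?_)
    rw [mem_Y] at ha
    rw [addRightEmbedding_apply, mem_X] at hb
    have := hmin _ _ (Nat.lt_succ_self a) (by lia) ha.2 hb.2
    lia
  have hsub : X ∪ Y.map (addRightEmbedding 1) ⊆ Icc 1 (i + 1) ∪ Icc (i + d) p.length := by
    refine union_subset (fun b hb ↦ ?_) (map_subset_iff_subset_preimage.2 fun a ha ↦ ?_)
    · obtain ⟨hb, hub⟩ := (mem_X b).1 hb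
      have hb0 : b ≠ 0 := by rintro rfl; simp at hub
      rw [mem_union, mem_Icc, mem_Icc]
      by_contra!
      have := hmin _ _ (by lia) (by lia) hvi hub
      lia
    · obtain ⟨ha, hva⟩ := (mem_Y a).1 ha
      have haN : a ≠ p.length := by rintro rfl; simp at hva
      rw [mem_preimage, addRightEmbedding_apply, mem_union, mem_Icc, mem_Icc]
      by_contra!
      have := hmin _ _ (by lia) hid hva hui
      lia
  calc G.degree u + G.degree v ≤ #X + #Y :=
        add_le_add (degree_le_card_filter_getVert p hu) (degree_le_card_filter_getVert p hv)
    _ = #(X ∪ Y.map (addRightEmbedding 1)) := by rw [card_union_of_disjoint hdisj, card_map]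
    _ ≤ (i + 1) + (p.length + 1 - (i + d)) := by
        simpa using (card_le_card hsub).trans (card_union_le _ _)
    _ ≤ circumference G := by lia

end Crossing

section Connectivity

variable [Fintype V] [DecidableEq V] {G H : SimpleGraph V} {k : ℕ}

lemma KConnected.mono (hGH : G ≤ H) (hG : KConnected G k) : KConnected H k :=
  ⟨hG.1, fun S hS ↦ (hG.2 S hS).mono (comap_monotone _ hGH)⟩

lemma KConnected.exists_adj_of_notMem (hG : KConnected G k) {T : Finset V} (hT : T.card < k)
    (S : Set V) {a b : V} (ha : a ∈ S) (haT : a ∉ T) (hb : b ∉ S) (hbT : b ∉ T) :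
    ∃ x ∈ S, ∃ y ∉ S, x ∉ T ∧ y ∉ T ∧ G.Adj x y := by
  obtain ⟨p⟩ := (hG.2 T hT).preconnected ⟨a, by simpa using haT⟩ ⟨b, by simpa using hbT⟩
  obtain ⟨d, -, hd, hd'⟩ := p.exists_boundary_dart (Subtype.val ⁻¹' S) ha hb
  exact ⟨d.fst, hd, d.snd, hd', d.fst.2, d.snd.2, d.adj⟩

lemma KConnected.connected (hG : KConnected G k) (hk : 0 < k) : G.Connected := by
  have : Nonempty V := Fintype.card_pos_iff.1 (hk.trans hG.1)
  refine ⟨fun u v ↦ ?_⟩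
  have h : (G.induce ((∅ : Finset V) : Set V)ᶜ).Connected := hG.2 ∅ (by simpa)
  exact (h.preconnected ⟨u, by simp⟩ ⟨v, by simp⟩).map (Embedding.induce _).toHom

end Connectivity

lemma exists_adj_adj_of_connected_of_ne_top {G : SimpleGraph V} (hG : G.Connected)
    (htop : G ≠ ⊤) : ∃ u v w, G.Adj u w ∧ G.Adj v w ∧ ¬ G.Adj u v ∧ u ≠ v := by
  obtain ⟨u, v, hne, huv⟩ := ne_top_iff_exists_not_adj.1 htop
  obtain ⟨p, -, hp⟩ := (hG u v).exists_path_of_dist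
  obtain ⟨a, w, b, haw, hwb, hab, hne'⟩ :=
    p.exists_adj_adj_not_adj_ne hp ((hG u v).one_lt_dist_of_ne_of_not_adj hne huv)
  exact ⟨a, b, w, haw, hwb.symm, hab, hne'⟩

lemma isHamiltonian_top [Fintype V] [DecidableEq V] (hV : 3 ≤ Fintype.card V) :
    (⊤ : SimpleGraph V).IsHamiltonian := by
  have : NeZero (Fintype.card V) := ⟨by lia⟩
  have : Nonempty V := Fintype.card_pos_iff.1 (by lia)
  have : Fact (1 < Fintype.card V) := ⟨by lia⟩
  have e : ZMod (Fintype.card V) ≃ V := Fintype.equivOfCardEq (ZMod.card _)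
  have he : IsCycleEnum ⊤ e := ⟨hV, e.injective, fun i ↦ by simp⟩
  exact isHamiltonian_of_card_le_circumference he.length_le_circumference

lemma three_mul_minDegree_le_card_of_not_adj [Fintype V] {G : SimpleGraph V} [DecidableRel G.Adj]
    (hcommon : ∀ u v, u ≠ v → ¬ G.Adj u v → (G.commonNeighbors u v).Subsingleton) {a b c : V}
    (hab : a ≠ b) (hac : a ≠ c) (hbc : b ≠ c) (hab' : ¬ G.Adj a b) (hac' : ¬ G.Adj a c)
    (hbc' : ¬ G.Adj b c) : 3 * G.minDegree ≤ Fintype.card V := by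
  classical
  let N := G.neighborFinset
  have card_inter {u v : V} (hne : u ≠ v) (huv : ¬ G.Adj u v) : (N u ∩ N v).card ≤ 1 := by
    simp only [Finset.card_le_one, Finset.mem_inter, N, mem_neighborFinset]
    exact fun x hx y hy ↦ hcommon u v hne huv hx hy
  have card_N (u : V) : G.minDegree ≤ (N u).card := G.minDegree_le_degree u
  have hdisj : Disjoint ({a, b, c} : Finset V) (N a ∪ N b ∪ N c) := by
    simp [N, hab', hac', hbc', adj_comm]
  have card_ab := Finset.card_union_add_card_inter (N a) (N b)
  have card_abc := Finset.card_union_add_card_inter (N a ∪ N b) (N c)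
  have card_inter_c : ((N a ∪ N b) ∩ N c).card ≤ 1 + 1 := by
    rw [Finset.union_inter_distrib_right]
    exact (Finset.card_union_le _ _).trans (add_le_add (card_inter hac hac') (card_inter hbc hbc'))
  have card_le := Finset.card_le_univ ({a, b, c} ∪ (N a ∪ N b ∪ N c))
  rw [Finset.card_union_of_disjoint hdisj, Finset.card_eq_three.2 ⟨a, b, c, hab, hac, hbc, rfl⟩]
    at card_le
  have := card_inter hab hab'
  have := card_N a
  have := card_N b
  have := card_N c
  lia

section Crossless

variable {G : SimpleGraph V} {u v w : V} {p : G.Walk u v}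

lemma not_adj_getVert_of_not_crosses (hcross : ¬ Crosses p) {i j : ℕ} (hij : i < j)
    (hj : j ≤ p.length) (hv : G.Adj v (p.getVert i)) : ¬ G.Adj u (p.getVert j) :=
  fun hu ↦ hcross ⟨i, j, hij, hj, hv, hu⟩

lemma commonNeighbors_subsingleton_of_not_crosses (hp : ∀ x, x ∈ p.support)
    (hcross : ¬ Crosses p) : (G.commonNeighbors u v).Subsingleton := by
  rintro x ⟨hux, hvx⟩ y ⟨huy, hvy⟩
  obtain ⟨i, rfl, hi⟩ := Walk.mem_support_iff_exists_getVert.1 (hp x)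
  obtain ⟨j, rfl, hj⟩ := Walk.mem_support_iff_exists_getVert.1 (hp y)
  rcases lt_trichotomy i j with hij | rfl | hji
  · exact (not_adj_getVert_of_not_crosses hcross hij hj hvx huy).elim
  · rfl
  · exact (not_adj_getVert_of_not_crosses hcross hji hi hvy hux).elim

lemma adj_getVert_of_not_crosses (hp : p.IsPath) (hcross : ¬ Crosses p) {r : ℕ}
    (hr : r ≤ p.length) (hu : G.Adj u (p.getVert r)) (hv : G.Adj v (p.getVert r))
    (hadj : ∀ x, x ≠ u → x ≠ v → G.Adj u x ∨ G.Adj v x) :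
    (∀ i, 0 < i → i ≤ r → G.Adj u (p.getVert i)) ∧
      ∀ i, r ≤ i → i < p.length → G.Adj v (p.getVert i) := by
  have adj_or_adj {i : ℕ} (h0 : 0 < i) (hi : i < p.length) :
      G.Adj u (p.getVert i) ∨ G.Adj v (p.getVert i) :=
    hadj _ (mt (hp.getVert_eq_start_iff hi.le).1 h0.ne')
      (mt (hp.getVert_eq_end_iff hi.le).1 hi.ne)
  have hr0 : r ≠ 0 := by rintro rfl; simp at hu
  have hrN : r ≠ p.length := by rintro rfl; simp at hv
  refine ⟨fun i h0 hir ↦ ?_, fun i hri hi ↦ ?_⟩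
  · rcases hir.lt_or_eq with hir | rfl
    · exact (adj_or_adj h0 (by lia)).resolve_right
        fun h ↦ not_adj_getVert_of_not_crosses hcross hir hr h hu
    · exact hu
  · rcases hri.lt_or_eq with hri | rfl
    · exact (adj_or_adj (by lia) hi).resolve_left
        (not_adj_getVert_of_not_crosses hcross hri hi.le hv)
    · exact hv

variable [Fintype V] [DecidableEq V]

lemma length_lt_circumference_of_adj_getVert (hp : p.IsPath) {a e : ℕ} (hae : a < e)
    (he : e < p.length) (hchord : G.Adj (p.getVert a) (p.getVert (e + 1)))
    (hu : G.Adj u (p.getVert (a + 1))) (hv : G.Adj v (p.getVert e)) :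
    p.length < circumference G := by
  obtain ⟨q, hq, hqlen, hqsupp⟩ := exists_isPath_getVert hp (Nat.zero_le a) (by lia)
  obtain ⟨r, hr, hrlen, hrsupp⟩ := exists_isPath_getVert hp (show e + 1 ≤ p.length from he) le_rfl
  obtain ⟨s, hs, hslen, hssupp⟩ := exists_isPath_getVert hp (show a + 1 ≤ e from hae) he.le
  have ne_getVert {i j : ℕ} (hij : i < j) (hj : j ≤ p.length) : p.getVert i ≠ p.getVert j :=
    fun h ↦ hij.ne (hp.getVert_injOn (hij.le.trans hj) hj h)
  have hqr : q.support.Disjoint r.support := by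
    intro x hxq hxr
    obtain ⟨i, hi, rfl⟩ := (hqsupp _).1 hxq
    obtain ⟨j, hj, hij⟩ := (hrsupp _).1 hxr
    exact ne_getVert (hi.2.trans_lt (hae.trans hj.1)) hj.2 hij.symm
  have hqrs : (q.append (r.cons hchord)).support.Disjoint s.reverse.support := by
    intro x hxqr hxs
    rw [Walk.support_append, Walk.support_cons, List.tail_cons, List.mem_append] at hxqr
    rw [Walk.support_reverse, List.mem_reverse] at hxs
    obtain ⟨j, hj, rfl⟩ := (hssupp _).1 hxs
    rcases hxqr with hx | hx
    · obtain ⟨i, hi, hij⟩ := (hqsupp _).1 hx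
      exact ne_getVert (hi.2.trans_lt hj.1) (hj.2.trans he.le) hij
    · obtain ⟨i, hi, hij⟩ := (hrsupp _).1 hx
      exact ne_getVert (hj.2.trans_lt hi.1) hi.2 hij.symm
  have hpath := isPath_append_cons (isPath_append_cons hq hr hchord hqr) hs.reverse
    (by simpa using hv) hqrs
  have := length_lt_circumference hpath (by simpa using hu.symm)
    (by simp only [Walk.length_append, Walk.length_cons, Walk.length_reverse]; lia)
  simp only [Walk.length_append, Walk.length_cons, Walk.length_reverse, hqlen, hrlen, hslen] at this
  lia

lemma length_lt_circumference_of_not_crosses (hG : KConnected G 2) (hp : p.IsHamiltonian)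
    (hcross : ¬ Crosses p) (hu : G.Adj u w) (hv : G.Adj v w)
    (hadj : ∀ x, x ≠ u → x ≠ v → G.Adj u x ∨ G.Adj v x) : p.length < circumference G := by
  obtain ⟨r, rfl, hr⟩ := Walk.mem_support_iff_exists_getVert.1 (hp.mem_support w)
  obtain ⟨adj_u, adj_v⟩ := adj_getVert_of_not_crosses hp.isPath hcross hr hu hv hadj
  have hr0 : r ≠ 0 := by rintro rfl; simp at hu
  obtain ⟨_, ⟨a, har, rfl⟩, y, hy, -, hyr, hay⟩ := hG.exists_adj_of_notMem
    (T := {p.getVert r}) (by simp) (p.getVert '' Set.Iio r) (a := u) (b := v)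
    ⟨0, Nat.pos_of_ne_zero hr0, p.getVert_zero⟩ (by simpa using hu.ne)
    (by
      rintro ⟨i, hi, hiv⟩
      have : i = p.length := (hp.isPath.getVert_eq_end_iff (hi.le.trans hr)).1 hiv
      exact (this.symm.trans_lt hi).not_ge hr)
    (by simpa using hv.ne)
  obtain ⟨b, rfl, hb⟩ := Walk.mem_support_iff_exists_getVert.1 (hp.mem_support y)
  have hrb : r < b := by
    by_contra! hbr
    rcases hbr.lt_or_eq with hbr | rfl
    · exact hy ⟨b, hbr, rfl⟩
    · simp at hyr
  have hbN : b ≠ p.length := by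
    rintro rfl
    exact not_adj_getVert_of_not_crosses hcross har hr (by simpa using hay.symm) hu
  rw [Set.mem_Iio] at har
  obtain ⟨e, rfl⟩ := Nat.exists_eq_add_of_lt (har.trans hrb)
  exact length_lt_circumference_of_adj_getVert hp.isPath (a := a) (e := a + e) (by lia) (by lia)
    hay (adj_u _ a.succ_pos har) (adj_v _ (by lia) (by lia))

end Crossless

section EdgeMaximal

variable [Fintype V] [DecidableEq V] {G : SimpleGraph V}

lemma exists_isHamiltonian_of_maximal (hG : Maximal (fun H : SimpleGraph V ↦ ¬ H.IsHamiltonian) G)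
    {u v : V} (hne : u ≠ v) (huv : ¬ G.Adj u v) : ∃ p : G.Walk u v, p.IsHamiltonian := by
  refine exists_isHamiltonian_of_sup_edge hG.prop (not_not.1 (hG.not_prop_of_gt ?_))
  exact lt_sup_edge _ _ _ hne huv

lemma two_mul_minDegree_le_circumference [DecidableRel G.Adj]
    (hG : Maximal (fun H : SimpleGraph V ↦ ¬ H.IsHamiltonian) G)
    (h2 : KConnected G 2) (hδ : Fintype.card V < 3 * G.minDegree) :
    2 * G.minDegree ≤ circumference G := by
  by_contra! hlt
  have : Nonempty V := (h2.connected two_pos).nonempty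
  have hcard : circumference G < Fintype.card V :=
    lt_of_not_ge fun h ↦ hG.prop (isHamiltonian_of_card_le_circumference h)
  have not_crosses {u v : V} (huv : ¬ G.Adj u v) {p : G.Walk u v} (hp : p.IsHamiltonian) :
      ¬ Crosses p := by
    intro hcross
    have := degree_add_degree_le_circumference hp.isPath hcross huv
      (fun _ _ ↦ hp.mem_support _) (fun _ _ ↦ hp.mem_support _) (by rw [hp.length_eq]; lia)
    have := G.minDegree_le_degree u
    have := G.minDegree_le_degree v
    lia
  have hcommon (u v : V) (hne : u ≠ v) (huv : ¬ G.Adj u v) :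
      (G.commonNeighbors u v).Subsingleton := by
    obtain ⟨p, hp⟩ := exists_isHamiltonian_of_maximal hG hne huv
    exact commonNeighbors_subsingleton_of_not_crosses hp.mem_support (not_crosses huv hp)
  have htop : G ≠ ⊤ := by
    rintro rfl
    exact hG.prop (isHamiltonian_top h2.1)
  obtain ⟨u, v, w, huw, hvw, huv, hne⟩ :=
    exists_adj_adj_of_connected_of_ne_top (h2.connected two_pos) htop
  obtain ⟨p, hp⟩ := exists_isHamiltonian_of_maximal hG hne huv
  have hadj (x : V) (hxu : x ≠ u) (hxv : x ≠ v) : G.Adj u x ∨ G.Adj v x := by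
    by_contra! hx
    exact hδ.not_ge <| three_mul_minDegree_le_card_of_not_adj hcommon hne hxu.symm hxv.symm huv
      hx.1 hx.2
  have := length_lt_circumference_of_not_crosses h2 hp (not_crosses huv hp) huw hvw hadj
  have := hp.length_eq
  lia

end EdgeMaximal

section Gaps

open Finset

variable {c k m : ℕ} {u v x : ZMod c} {A B : Finset (ZMod c)}

/-- The arc of the `k` elements `u + 1, …, u + k` following `u` in the cyclic order of `ZMod c`.
That `S` leaves a gap of size `k` after `u` is expressed as `Disjoint (arcAfter u k) S`. -/
def arcAfter (u : ZMod c) (k : ℕ) : Finset (ZMod c) :=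
  (Icc 1 k).image fun d : ℕ ↦ u + d

lemma mem_arcAfter : x ∈ arcAfter u k ↔ ∃ d : ℕ, 0 < d ∧ d ≤ k ∧ u + d = x := by
  simp [arcAfter, Nat.succ_le_iff, and_assoc]

lemma add_mem_arcAfter {d : ℕ} (hd : 0 < d) (hdk : d ≤ k) : u + d ∈ arcAfter u k :=
  mem_arcAfter.2 ⟨d, hd, hdk, rfl⟩

lemma card_arcAfter (u : ZMod c) (hk : k ≤ c) : #(arcAfter u k) = k := by
  rw [arcAfter, card_image_of_injOn, Nat.card_Icc, Nat.add_sub_cancel]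
  rw [coe_Icc]
  exact (add_right_injective u).comp_injOn (natCast_injOn_Icc (by lia))

lemma lt_of_self_notMem_arcAfter [NeZero c] (hu : u ∉ arcAfter u k) : k < c := by
  by_contra! hck
  exact hu (by simpa using add_mem_arcAfter (u := u) (NeZero.pos c) hck)

lemma mem_arcAfter_of_add_mem {j : ℕ} (hj : j ≤ m)
    (hx : x + j ∈ arcAfter (u + (m : ZMod c)) k) : x ∈ arcAfter u (k + m) := by
  obtain ⟨d, hd, hdk, hdx⟩ := mem_arcAfter.1 hx
  refine mem_arcAfter.2 ⟨d + (m - j), by lia, by lia, ?_⟩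
  push_cast [Nat.cast_sub hj]
  linear_combination hdx

lemma disjoint_map_arcAfter {S : Finset (ZMod c)} (hS : Disjoint (arcAfter u (k + m)) S) {j : ℕ}
    (hj : j ≤ m) :
    Disjoint (S.map (addRightEmbedding (j : ZMod c))) (arcAfter (u + (m : ZMod c)) k) :=
  Finset.disjoint_left.2 <| forall_mem_map.2 fun _ hs hmem ↦
    Finset.disjoint_right.1 hS hs (mem_arcAfter_of_add_mem hj hmem)

lemma disjoint_union_map_add_one_map_add_two
    (hBA : ∀ b ∈ B, Disjoint (arcAfter b (k + 2)) A) :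
    Disjoint (A ∪ A.map (addRightEmbedding 1)) (B.map (addRightEmbedding 2)) := by
  refine Finset.disjoint_right.2 (forall_mem_map.2 fun b hb hmem ↦ ?_)
  have hgap {d : ℕ} (hd : 0 < d) (hdk : d ≤ k + 2) : b + d ∉ A :=
    Finset.disjoint_left.1 (hBA b hb) (add_mem_arcAfter hd hdk)
  rcases mem_union.1 hmem with hmem | hmem
  · exact hgap two_pos (by lia) (by simpa using hmem)
  · obtain ⟨a, ha, hab⟩ := mem_map.1 hmem
    simp only [addRightEmbedding_apply] at hab
    have : a = b + (1 : ℕ) := by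
      push_cast
      linear_combination hab
    exact hgap one_pos (by lia) (this ▸ ha)

lemma disjoint_arcAfter (huv : u ≠ v) (hu : u ∉ arcAfter v k) (hv : v ∉ arcAfter u k) :
    Disjoint (arcAfter u k) (arcAfter v k) := by
  have ne_of_lt {u v : ZMod c} (hv : v ∉ arcAfter u k) {d e : ℕ} (hd : d ≤ k) (hed : e < d) :
      u + d ≠ v + e := by
    refine fun h ↦ hv (mem_arcAfter.2 ⟨d - e, by lia, by lia, ?_⟩)
    push_cast [Nat.cast_sub hed.le]
    linear_combination h
  refine Finset.disjoint_left.2 fun x hxu hxv ↦ ?_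
  obtain ⟨d, -, hd, rfl⟩ := mem_arcAfter.1 hxu
  obtain ⟨e, -, he, hde⟩ := mem_arcAfter.1 hxv
  rcases lt_trichotomy d e with h | rfl | h
  · exact ne_of_lt hu he h hde
  · exact huv (add_right_cancel hde).symm
  · exact ne_of_lt hv hd h hde.symm

variable [NeZero c]

-- Take `u ∈ A \ B` for which the next element of `B` is nearest: an element of `A` inside the gap
-- between the two would be nearer still.
lemma exists_disjoint_arcAfter_union (hAB : ∀ a ∈ A, Disjoint (arcAfter a k) B)
    (hA : (A \ B).Nonempty) (hB : B.Nonempty) :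
    ∃ u ∈ A \ B, Disjoint (arcAfter u k) (A ∪ B) := by
  have hex : ∃ d : ℕ, 0 < d ∧ ∃ a ∈ A \ B, a + d ∈ B := by
    obtain ⟨a, ha⟩ := hA
    obtain ⟨b, hb⟩ := hB
    obtain ⟨d, hd, -, rfl⟩ := exists_natCast_add_eq (i := a) (j := b) <| by
      rintro rfl
      exact (mem_sdiff.1 ha).2 hb
    exact ⟨d, hd, a, ha, hb⟩
  obtain ⟨hpos, u, hu, hub⟩ := Nat.find_spec hex
  have huB := hAB u (mem_sdiff.1 hu).1
  have hk : k < Nat.find hex := by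
    by_contra! hle
    exact Finset.disjoint_left.1 huB (add_mem_arcAfter hpos hle) hub
  refine ⟨u, hu, disjoint_union_right.2 ⟨Finset.disjoint_left.2 fun x hx hxA ↦ ?_, huB⟩⟩
  have hxB := Finset.disjoint_left.1 huB hx
  obtain ⟨d, hd, hdk, rfl⟩ := mem_arcAfter.1 hx
  refine Nat.find_min hex (m := Nat.find hex - d) (by lia)
    ⟨by lia, u + d, mem_sdiff.2 ⟨hxA, hxB⟩, ?_⟩
  rwa [add_assoc, ← Nat.cast_add, Nat.add_sub_cancel' (by lia)]

lemma exists_ne_disjoint_arcAfter_union (hAB : ∀ a ∈ A, Disjoint (arcAfter a k) B)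
    (hBA : ∀ b ∈ B, Disjoint (arcAfter b k) A) (hA : 1 < #A) (hB : 1 < #B) :
    ∃ u ∈ A ∪ B, ∃ v ∈ A ∪ B, u ≠ v ∧ Disjoint (arcAfter u k) (A ∪ B) ∧
      Disjoint (arcAfter v k) (A ∪ B) := by
  by_cases hI : 1 < #(A ∩ B)
  · obtain ⟨u, hu, v, hv, huv⟩ := one_lt_card.1 hI
    rw [mem_inter] at hu hv
    exact ⟨u, mem_union_left _ hu.1, v, mem_union_left _ hv.1, huv,
      disjoint_union_right.2 ⟨hBA u hu.2, hAB u hu.1⟩,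
      disjoint_union_right.2 ⟨hBA v hv.2, hAB v hv.1⟩⟩
  · have hAB' : (A \ B).Nonempty := by
      rw [← card_pos]
      have := card_sdiff_add_card_inter A B
      lia
    have hBA' : (B \ A).Nonempty := by
      rw [← card_pos]
      have := card_sdiff_add_card_inter B A
      rw [inter_comm] at this
      lia
    obtain ⟨u, hu, hgapu⟩ := exists_disjoint_arcAfter_union hAB hAB' (hBA'.mono sdiff_subset)
    obtain ⟨v, hv, hgapv⟩ := exists_disjoint_arcAfter_union hBA hBA' (hAB'.mono sdiff_subset)
    rw [mem_sdiff] at hu hv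
    exact ⟨u, mem_union_left _ hu.1, v, mem_union_right _ hv.1, ne_of_mem_of_not_mem hu.1 hv.2,
      hgapu, union_comm A B ▸ hgapv⟩

lemma two_mul_card_add_card_add_two_mul_le (hAA : ∀ a ∈ A, a + 1 ∉ A)
    (hAB : ∀ a ∈ A, Disjoint (arcAfter a (k + 2)) B)
    (hBA : ∀ b ∈ B, Disjoint (arcAfter b (k + 2)) A) (hA : 1 < #A) (hB : 1 < #B) :
    2 * #A + #B + 2 * k ≤ c := by
  obtain ⟨u, hu, v, hv, huv, hgapu, hgapv⟩ := exists_ne_disjoint_arcAfter_union hAB hBA hA hB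
  have hk := lt_of_self_notMem_arcAfter (Finset.disjoint_right.1 hgapu hu)
  let A₁ := A.map (addRightEmbedding 1)
  let B₂ := B.map (addRightEmbedding 2)
  have hA₁ : Disjoint A A₁ := Finset.disjoint_right.2 (forall_mem_map.2 hAA)
  have hB₂ : Disjoint (A ∪ A₁) B₂ := disjoint_union_map_add_one_map_add_two hBA
  have harc {w : ZMod c} (hw : Disjoint (arcAfter w (k + 2)) (A ∪ B)) :
      Disjoint (A ∪ A₁ ∪ B₂) (arcAfter (w + 2) k) := by
    rw [disjoint_union_right] at hw
    refine disjoint_union_left.2 ⟨disjoint_union_left.2 ⟨?_, ?_⟩, ?_⟩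
    · refine Finset.disjoint_left.2 fun a ha h ↦ Finset.disjoint_right.1 hw.1 ha ?_
      exact mem_arcAfter_of_add_mem (j := 0) (m := 2) zero_le_two (by simpa using h)
    · exact mod_cast disjoint_map_arcAfter hw.1 one_le_two
    · exact mod_cast disjoint_map_arcAfter hw.2 le_rfl
  have harcs : Disjoint (arcAfter (u + 2) k) (arcAfter (v + 2) k) := by
    refine disjoint_arcAfter (fun h ↦ huv (add_right_cancel h)) (fun h ↦ ?_) fun h ↦ ?_
    · exact Finset.disjoint_right.1 hgapv hu (mem_arcAfter_of_add_mem le_rfl (mod_cast h))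
    · exact Finset.disjoint_right.1 hgapu hv (mem_arcAfter_of_add_mem le_rfl (mod_cast h))
  have hcard := card_le_univ (A ∪ A₁ ∪ B₂ ∪ arcAfter (u + 2) k ∪ arcAfter (v + 2) k)
  rw [card_union_of_disjoint (disjoint_union_left.2 ⟨harc hgapv, harcs⟩),
    card_union_of_disjoint (harc hgapu), card_union_of_disjoint hB₂, card_union_of_disjoint hA₁,
    card_map, card_map, card_arcAfter _ (by lia), card_arcAfter _ (by lia), ZMod.card] at hcard
  lia

end Gaps

lemma exists_isPath_forall_adj_mem_support [Finite V] (G : SimpleGraph V) {S : Set V}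
    (hS : S.Nonempty) :
    ∃ (x y : V) (q : G.Walk x y), q.IsPath ∧ (∀ z ∈ q.support, z ∈ S) ∧
      (∀ z ∈ S, G.Adj x z → z ∈ q.support) ∧ ∀ z ∈ S, G.Adj y z → z ∈ q.support := by
  have : Nonempty S := hS.to_subtype
  obtain ⟨x, y, q, hq, hmax⟩ := Walk.exists_isPath_forall_isPath_length_le_length (G.induce S)
  have hend {a b : S} {r : (G.induce S).Walk a b} (hr : r.IsPath) (hlen : r.length = q.length)
      (z : S) (hz : G.Adj a z) : z ∈ r.support := by
    by_contra hzr
    have hza : (G.induce S).Adj z a := hz.symm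
    have := hmax _ _ _ (hr.cons hzr (h := hza))
    simp [hlen] at this
  obtain ⟨p, hp, hsupp⟩ :
      ∃ p : G.Walk (x : V) y, p.IsPath ∧ p.support = q.support.map Subtype.val :=
    ⟨q.map (Embedding.induce S).toHom, hq.map Subtype.val_injective, Walk.support_map _ _⟩
  refine ⟨x, y, p, hp, ?_, ?_, ?_⟩
  · simp +contextual [hsupp]
  · intro z hz hxz
    exact hsupp ▸ List.mem_map_of_mem (hend hq rfl ⟨z, hz⟩ hxz)
  · intro z hz hyz
    have hzq := hend hq.reverse q.length_reverse ⟨z, hz⟩ hyz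
    rw [Walk.support_reverse, List.mem_reverse] at hzq
    exact hsupp ▸ List.mem_map_of_mem hzq

section LongestCycle

open Finset

variable {G : SimpleGraph V} {c : ℕ} {f : ZMod c → V} {x y : V}

namespace IsCycleEnum

lemma length_add_two_le [Fintype V] [DecidableEq V] (hf : IsCycleEnum G f)
    (hc : circumference G ≤ c) {q : G.Walk x y} (hq : q.IsPath)
    (hqf : ∀ z ∈ q.support, z ∉ Set.range f) {i : ZMod c} {d : ℕ} (hd : 0 < d) (hdc : d < c)
    (hx : G.Adj x (f i)) (hy : G.Adj y (f (i + d))) : q.length + 2 ≤ d := by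
  obtain ⟨r, hr, hrlen, hrsupp⟩ := hf.exists_isPath i hdc.le (by lia)
  have hrq : r.support.Disjoint q.support := by
    intro z hzr hzq
    obtain ⟨m, -, rfl⟩ := (hrsupp z).1 hzr
    exact hqf _ hzq ⟨_, rfl⟩
  have := length_lt_circumference (isPath_append_cons hr hq (by simpa using hx.symm) hrq) hy
    (by rw [Walk.length_append, Walk.length_cons]; lia)
  simp only [Walk.length_append, Walk.length_cons, hrlen] at this
  lia

lemma add_length_lt_card [NeZero c] [Fintype V] (hf : IsCycleEnum G f)
    {q : G.Walk x y} (hq : q.IsPath) (hqf : ∀ z ∈ q.support, z ∉ Set.range f) :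
    c + q.length < Fintype.card V := by
  classical
  have hdisj : Disjoint (univ.image f) q.support.toFinset := by
    refine Finset.disjoint_right.2 fun z hz hzf ↦ hqf z (List.mem_toFinset.1 hz) ?_
    simpa using hzf
  have := card_le_univ (univ.image f ∪ q.support.toFinset)
  rw [card_union_of_disjoint hdisj, card_image_of_injective _ hf.injective, card_univ, ZMod.card,
    List.toFinset_card_of_nodup hq.support_nodup, Walk.length_support] at this
  lia

lemma not_adj_add_one_add_one [Fintype V] [DecidableEq V] (hf : IsCycleEnum G f)
    (hc : circumference G ≤ c) (hxf : x ∉ Set.range f) {i j : ZMod c} (hi : G.Adj x (f i))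
    (hj : G.Adj x (f j)) : ¬ G.Adj (f (i + 1)) (f (j + 1)) := by
  intro hadj
  have := hf.three_le
  have : NeZero c := ⟨by lia⟩
  obtain ⟨d, hd, hdc, rfl⟩ := exists_natCast_add_eq (i := i) (j := j)
    (by rintro rfl; exact G.irrefl hadj)
  obtain ⟨r, hr, hrlen, hrsupp⟩ := hf.exists_isPath i (show 1 ≤ d from hd) (by lia)
  obtain ⟨s, hs, hslen, hssupp⟩ := hf.exists_isPath i (show d + 1 ≤ c from hdc) (by lia)
  have hrs : r.reverse.support.Disjoint s.support := by
    intro z hzr hzs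
    rw [Walk.support_reverse, List.mem_reverse] at hzr
    obtain ⟨m, hm, rfl⟩ := (hrsupp z).1 hzr
    obtain ⟨n, hn, hmn⟩ := (hssupp _).1 hzs
    have := natCast_injOn_Icc (show c < 1 + c by lia) ⟨by have := hn.1; lia, hn.2⟩
      ⟨hm.1, hm.2.trans hdc.le⟩ (add_left_cancel (hf.injective hmn))
    have := hm.2
    have := hn.1
    lia
  have hchord : G.Adj (f (i + (1 : ℕ))) (f (i + (d + 1 : ℕ))) := by
    simpa [add_assoc] using hadj
  have hpath := isPath_append_cons hr.reverse hs hchord hrs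
  have hnot : x ∉ (r.reverse.append (s.cons hchord)).support := by
    intro hx
    rw [Walk.support_append, Walk.support_cons, List.tail_cons, List.mem_append,
      Walk.support_reverse, List.mem_reverse, hrsupp, hssupp] at hx
    rcases hx with ⟨m, -, rfl⟩ | ⟨m, -, rfl⟩ <;> exact hxf ⟨_, rfl⟩
  have := length_lt_circumference (hpath.concat hnot (h := by simpa using hi.symm)) hj
    (by rw [Walk.length_concat, Walk.length_append, Walk.length_cons]; lia)
  simp only [Walk.length_concat, Walk.length_append, Walk.length_cons, Walk.length_reverse, hrlen,
    hslen] at this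
  lia

end IsCycleEnum

/-- The positions, on a cycle enumerated by `f`, of the neighbours of `x`. -/
def attachments [NeZero c] (G : SimpleGraph V) [DecidableRel G.Adj] (f : ZMod c → V) (x : V) :
    Finset (ZMod c) :=
  {i | G.Adj x (f i)}

variable [NeZero c] [DecidableRel G.Adj]

lemma mem_attachments {i : ZMod c} : i ∈ attachments G f x ↔ G.Adj x (f i) := by
  simp [attachments]

variable [Fintype V]

lemma degree_le_card_attachments_add_length {q : G.Walk x y}
    (hx : ∀ z ∉ Set.range f, G.Adj x z → z ∈ q.support) :
    G.degree x ≤ #(attachments G f x) + q.length := by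
  classical
  have hsub : G.neighborFinset x ⊆ (attachments G f x).image f ∪ q.support.tail.toFinset := by
    intro z hz
    rw [mem_neighborFinset] at hz
    by_cases hzf : z ∈ Set.range f
    · obtain ⟨i, rfl⟩ := hzf
      exact mem_union_left _ (mem_image_of_mem f (mem_attachments.2 hz))
    · refine mem_union_right _ (List.mem_toFinset.2 ?_)
      exact ((Walk.mem_support_iff q).1 (hx z hzf hz)).resolve_left hz.ne'
  calc G.degree x ≤ #((attachments G f x).image f) + #q.support.tail.toFinset := by
        rw [← card_neighborFinset_eq_degree]
        exact (card_le_card hsub).trans (card_union_le _ _)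
    _ ≤ #(attachments G f x) + q.length := by
        refine add_le_add card_image_le ((List.toFinset_card_le _).trans_eq ?_)
        simp

variable [DecidableEq V]

namespace IsCycleEnum

lemma disjoint_arcAfter_attachments (hf : IsCycleEnum G f) (hc : circumference G ≤ c)
    {q : G.Walk x y} (hq : q.IsPath) (hqf : ∀ z ∈ q.support, z ∉ Set.range f)
    (hqc : q.length + 1 < c) {a : ZMod c} (ha : a ∈ attachments G f x) :
    Disjoint (arcAfter a (q.length + 1)) (attachments G f y) := by
  refine Finset.disjoint_left.2 fun z hz hzy ↦ ?_
  obtain ⟨d, hd, hdq, rfl⟩ := mem_arcAfter.1 hz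
  have := hf.length_add_two_le hc hq hqf hd (by lia) (mem_attachments.1 ha) (mem_attachments.1 hzy)
  lia

lemma add_one_notMem_attachments (hf : IsCycleEnum G f) (hc : circumference G ≤ c)
    (hxf : x ∉ Set.range f) {a : ZMod c} (ha : a ∈ attachments G f x) :
    a + 1 ∉ attachments G f x := by
  have := hf.three_le
  have h := hf.disjoint_arcAfter_attachments hc (q := .nil) .nil (by simpa using hxf)
    (by rw [Walk.length_nil]; lia) ha
  exact Finset.disjoint_left.1 h (mem_arcAfter.2 ⟨1, by simp⟩)

lemma card_attachments_lt_indepNum (hf : IsCycleEnum G f) (hc : circumference G ≤ c)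
    (hxf : x ∉ Set.range f) : #(attachments G f x) < G.indepNum := by
  let T := (attachments G f x).image fun i ↦ f (i + 1)
  have hT : G.IsIndepSet (T : Set V) := by
    rw [coe_image]
    rintro _ ⟨i, hi, rfl⟩ _ ⟨j, hj, rfl⟩ -
    exact hf.not_adj_add_one_add_one hc hxf (mem_attachments.1 hi) (mem_attachments.1 hj)
  have hxT : x ∉ T := by
    rw [mem_image]
    rintro ⟨i, -, hi⟩
    exact hxf ⟨_, hi⟩
  have hxT' : ∀ y ∈ T, ¬ G.Adj x y :=
    forall_mem_image.2 fun i hi ↦ mt mem_attachments.2 (hf.add_one_notMem_attachments hc hxf hi)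
  have hind : G.IsIndepSet (insert x T : Finset V) := by
    rw [coe_insert, IsIndepSet, Set.pairwise_insert]
    exact ⟨hT, fun y hy _ ↦ ⟨hxT' y hy, fun h ↦ hxT' y hy h.symm⟩⟩
  calc #(attachments G f x) < #(attachments G f x) + 1 := Nat.lt_succ_self _
    _ = #(insert x T) := by
        rw [card_insert_of_notMem hxT, card_image_of_injective]
        exact hf.injective.comp (add_left_injective 1)
    _ ≤ G.indepNum := hind.card_le_indepNum

end IsCycleEnum

lemma isHamiltonian_of_two_mul_minDegree_le_circumference
    (hα : G.indepNum ≤ G.minDegree) (hδ : Fintype.card V + 2 ≤ 3 * G.minDegree)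
    (hcirc : 2 * G.minDegree ≤ circumference G) : G.IsHamiltonian := by
  by_contra hG
  obtain ⟨v, w, hw, hwlen⟩ := exists_isCycle_length_eq_circumference (G := G) (by lia)
  have : Nonempty V := ⟨v⟩
  have hcard : circumference G < Fintype.card V :=
    lt_of_not_ge fun h ↦ hG (isHamiltonian_of_card_le_circumference h)
  have : NeZero (circumference G) := ⟨by lia⟩
  obtain ⟨f, hf⟩ := exists_isCycleEnum hw hwlen
  have houtside : (Set.range f)ᶜ.Nonempty := by
    rw [Set.nonempty_compl, Ne, Set.range_eq_univ]
    intro hsurj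
    have := Fintype.card_le_of_surjective f hsurj
    rw [ZMod.card] at this
    lia
  obtain ⟨x, y, q, hq, hqf, hx, hy⟩ := exists_isPath_forall_adj_mem_support G houtside
  have hqcard := hf.add_length_lt_card hq hqf
  have hdegx := (G.minDegree_le_degree x).trans (degree_le_card_attachments_add_length hx)
  have hdegy := (G.minDegree_le_degree y).trans
    (degree_le_card_attachments_add_length (q := q.reverse) (by simpa using hy))
  rw [Walk.length_reverse] at hdegy
  have hxf := hqf x q.start_mem_support
  rcases hlen : q.length with _ | k
  · have := hf.card_attachments_lt_indepNum le_rfl hxf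
    lia
  · have harc {a b : V} {r : G.Walk a b} (hr : r.IsPath) (hrlen : r.length = k + 1)
        (hrf : ∀ z ∈ r.support, z ∉ Set.range f) (i : ZMod _) (hi : i ∈ attachments G f a) :
        Disjoint (arcAfter i (k + 2)) (attachments G f b) := by
      simpa [hrlen] using hf.disjoint_arcAfter_attachments le_rfl hr hrf (by lia) hi
    have := two_mul_card_add_card_add_two_mul_le
      (fun _ ↦ hf.add_one_notMem_attachments le_rfl hxf) (harc hq hlen hqf)
      (harc hq.reverse (by simpa) (by simpa using hqf)) (by lia) (by lia)
    lia

end LongestCycle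

lemma indepNum_eq_indepNumber [Fintype V] [DecidableEq V] (G : SimpleGraph V) :
    G.indepNum = indepNumber G := by
  refine congrArg sSup (Set.ext fun k ↦ exists_congr fun s ↦ ?_)
  rw [isNIndepSet_iff, isIndepSet_iff]
  exact and_congr_left'
    ⟨fun h u hu v hv huv ↦ h hu hv huv.ne huv, fun h u hu v hv _ ↦ h u hu v hv⟩

lemma indepNum_anti [Finite V] {G H : SimpleGraph V} (hGH : G ≤ H) :
    H.indepNum ≤ G.indepNum := by
  obtain ⟨s, hs⟩ := H.exists_isNIndepSet_indepNum
  rw [← hs.card_eq]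
  exact IsIndepSet.card_le_indepNum (hs.isIndepSet.mono' fun _ _ h ↦ mt (hGH ·) h)

theorem nashWilliams_hamiltonian (G : SimpleGraph V) [Fintype V] [DecidableEq V] [DecidableRel G.Adj]
    (h2 : KConnected G 2)
    (hα : indepNumber G ≤ G.minDegree)
    (hδ : (G.minDegree : ℝ) ≥ (Fintype.card V + 2 : ℝ) / 3) :
    G.IsHamiltonian := by
  classical
  by_contra hG
  obtain ⟨H, hGH, hH⟩ :=
    Finite.exists_le_maximal (p := fun H : SimpleGraph V ↦ ¬ H.IsHamiltonian) hG
  have hdeg : G.minDegree ≤ H.minDegree := minDegree_le_minDegree hGH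
  have hindep : H.indepNum ≤ H.minDegree :=
    calc H.indepNum ≤ G.indepNum := indepNum_anti hGH
      _ = indepNumber G := indepNum_eq_indepNumber G
      _ ≤ H.minDegree := hα.trans hdeg
  have hcard : Fintype.card V + 2 ≤ 3 * H.minDegree := by
    have hreal : (Fintype.card V + 2 : ℝ) ≤ 3 * G.minDegree := by linarith
    have hnat : Fintype.card V + 2 ≤ 3 * G.minDegree := mod_cast hreal
    lia
  have hcirc := two_mul_minDegree_le_circumference hH (h2.mono hGH) (by lia)
  exact hH.prop (isHamiltonian_of_two_mul_minDegree_le_circumference hindep hcard hcirc)
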